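/- Let k ∈ ℕ. Suppose A, B : ℤ^d × ℤ^d → ℂ are matrices such that Σ_{l∈ℤ^d} (1+|l|)^k sup_{m∈ℤ^d} |A(m,m−l)| < ∞ (i.e. A ∈ C_k) and Σ_{l∈ℤ^d} sup_{m∈ℤ^d} |B(m,m−l)| < ∞ (i.e. B ∈ C_0), and that B is a two-sided inverse of A in the sense of matrix multiplication: Σ_m A(j,m) B(m,l) = δ_{j,l} = Σ_m B(j,m) A(m,l) for all j,l ∈ ℤ^d (all sums converging absolutely). Then Σ_{l∈ℤ^d} (1+|l|)^k sup_{m∈ℤ^d} |B(m,m−l)| < ∞, i.e. B ∈ C_k. (The algebra C_k of convolution-dominated matrices is inverse-closed in C_0.) -/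

import Mathlib

/-!
The proof is by induction on the order `i ≤ k` of the weight, starting from `B ∈ C_0`.

For a bounded function `f` on `ℤ^d`, acting by multiplication, `A B = B A = 1` gives the commutator
identity `(f(p) - f(q)) B(p,q) = ∑_{m,n} B(p,m) (f(n) - f(m)) A(m,n) B(n,q)`. Boundedness of `f`
makes every rearrangement absolutely convergent, without prior knowledge of the decay of `B`.
For fixed `p, q`, the function `f(x) = min(|x - q|, |p - q|)` is bounded and 1-Lipschitz, with
`f(q) = 0` and `f(p) = |p - q|`, so that (`entry_bound`)
`|p - q| |B(p,q)| ≤ ∑_{m,n} |B(p,m)| |m - n| |A(m,n)| |B(n,q)|`.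

Writing `a(l) = sup_m |A(m,m-l)|` and `b(l) = sup_m |B(m,m-l)|`, it follows that
`|l| b(l) ≤ (b ∗ (|·| a) ∗ b)(l)` (`diagSup_bound`). The weight `(1+|l|)^i` is submultiplicative, so
`‖|·| b‖_i ≤ ‖b‖_i ‖|·| a‖_i ‖b‖_i` for the weighted `ℓ^1`-norms `‖·‖_i` (`weighted_bound`), and
`A ∈ C_{i+1}`, `B ∈ C_i` imply `B ∈ C_{i+1}`.
-/

open scoped ENNReal

noncomputable section

/-- The 1-norm on `ℤ^d`, with values in `ℕ`. -/
def lat {d : ℕ} (l : Fin d → ℤ) : ℕ := ∑ j, (l j).natAbs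

/-- The supremum of the moduli of the entries on the `l`-th side diagonal, in `ℝ≥0∞`. -/
def diagSup {d : ℕ} (A : (Fin d → ℤ) → (Fin d → ℤ) → ℂ) (l : Fin d → ℤ) : ℝ≥0∞ :=
  ⨆ m, ‖A m (m - l)‖ₑ

section

variable {d : ℕ}

lemma lat_zero : lat (0 : Fin d → ℤ) = 0 := by simp [lat]

lemma lat_add_le (x y : Fin d → ℤ) : lat (x + y) ≤ lat x + lat y := by
  unfold lat
  rw [← Finset.sum_add_distrib]
  exact Finset.sum_le_sum fun j _ => Int.natAbs_add_le _ _

lemma lat_neg (x : Fin d → ℤ) : lat (-x) = lat x := by simp [lat]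

lemma enorm_le_diagSup (A : (Fin d → ℤ) → (Fin d → ℤ) → ℂ) (p q : Fin d → ℤ) :
    ‖A p q‖ₑ ≤ diagSup A (p - q) := by
  simpa [diagSup] using le_iSup (fun m => ‖A m (m - (p - q))‖ₑ) p

/-- The truncated distance `x ↦ min(|x - q|, |p - q|)` is 1-Lipschitz. -/
lemma enorm_trunc_sub_le (p q m n : Fin d → ℤ) :
    ‖((min (lat (n - q)) (lat (p - q)) : ℕ) : ℂ) - ((min (lat (m - q)) (lat (p - q)) : ℕ) : ℂ)‖ₑ
      ≤ (lat (m - n) : ℝ≥0∞) := by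
  have h1 : lat (n - q) ≤ lat (m - n) + lat (m - q) := by
    have := lat_add_le (-(m - n)) (m - q)
    rw [lat_neg] at this
    convert this using 2
    abel
  have h2 : lat (m - q) ≤ lat (m - n) + lat (n - q) := by
    have := lat_add_le (m - n) (n - q)
    convert this using 2
    abel
  generalize lat (n - q) = u at *
  generalize lat (m - q) = v at *
  generalize lat (p - q) = w at *
  generalize lat (m - n) = t at *
  have h3 : |((min u w : ℕ) : ℤ) - ((min v w : ℕ) : ℤ)| ≤ (t : ℤ) := by
    rw [abs_le]; omega
  have h4 : ‖((min u w : ℕ) : ℂ) - ((min v w : ℕ) : ℂ)‖ ≤ (t : ℝ) := by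
    have : ((min u w : ℕ) : ℂ) - ((min v w : ℕ) : ℂ)
        = ((((min u w : ℕ) : ℤ) - ((min v w : ℕ) : ℤ) : ℤ) : ℂ) := by
      rw [Int.cast_sub, Int.cast_natCast, Int.cast_natCast]
    rw [this, Complex.norm_intCast]
    exact_mod_cast h3
  rw [← ofReal_norm]
  calc _ ≤ ENNReal.ofReal (t : ℝ) := ENNReal.ofReal_le_ofReal h4
    _ = _ := ENNReal.ofReal_natCast t

/-- Absolute convergence of the triple product `B A B`, for `A, B ∈ C_0`. -/
lemma summable_triple (A B : (Fin d → ℤ) → (Fin d → ℤ) → ℂ)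
    (hA : (∑' l, diagSup A l) ≠ ⊤) (hB : (∑' l, diagSup B l) ≠ ⊤) (p q : Fin d → ℤ) :
    Summable fun x : (Fin d → ℤ) × (Fin d → ℤ) => ‖B p x.1 * A x.1 x.2 * B x.2 q‖ := by
  have key : (∑' x : (Fin d → ℤ) × (Fin d → ℤ), ‖B p x.1 * A x.1 x.2 * B x.2 q‖ₑ)
      ≤ (∑' l, diagSup B l) * (∑' l, diagSup A l) * (∑' l, diagSup B l) := by
    rw [ENNReal.tsum_prod (f := fun m n => ‖B p m * A m n * B n q‖ₑ)]
    calc _ ≤ ∑' m, ∑' n, diagSup B (p - m) * diagSup A (m - n) * (∑' l, diagSup B l) := by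
          gcongr with m n
          rw [enorm_mul, enorm_mul]
          gcongr
          · exact enorm_le_diagSup B p m
          · exact enorm_le_diagSup A m n
          · exact (enorm_le_diagSup B n q).trans (ENNReal.le_tsum _)
      _ = ∑' m, diagSup B (p - m) * (∑' n, diagSup A n) * (∑' l, diagSup B l) := by
          congr 1; ext m
          rw [ENNReal.tsum_mul_right, ENNReal.tsum_mul_left]
          congr 2
          exact (Equiv.subLeft m).tsum_eq (diagSup A)
      _ = _ := by
          rw [ENNReal.tsum_mul_right, ENNReal.tsum_mul_right]
          congr 2
          exact (Equiv.subLeft p).tsum_eq (diagSup B)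
  have fin : (∑' x : (Fin d → ℤ) × (Fin d → ℤ), ‖B p x.1 * A x.1 x.2 * B x.2 q‖ₑ) ≠ ⊤ :=
    ne_top_of_le_ne_top (ENNReal.mul_ne_top (ENNReal.mul_ne_top hB hA) hB) key
  have := ENNReal.tsum_coe_ne_top_iff_summable.1 fin
  exact NNReal.summable_coe.2 this

/-- The entrywise estimate obtained from the commutator identity for the truncated distance. -/
lemma entry_bound (A B : (Fin d → ℤ) → (Fin d → ℤ) → ℂ)
    (hA : (∑' l, diagSup A l) ≠ ⊤) (hB : (∑' l, diagSup B l) ≠ ⊤)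
    (hAB : ∀ j l : Fin d → ℤ, (∑' m : Fin d → ℤ, A j m * B m l) = if j = l then 1 else 0)
    (hBA : ∀ j l : Fin d → ℤ, (∑' m : Fin d → ℤ, B j m * A m l) = if j = l then 1 else 0)
    (p q : Fin d → ℤ) :
    (lat (p - q) : ℝ≥0∞) * ‖B p q‖ₑ
      ≤ ∑' m, ∑' n, ‖B p m‖ₑ * (lat (m - n) * ‖A m n‖ₑ) * ‖B n q‖ₑ := by
  have hS := summable_triple A B hA hB p q
  set f : (Fin d → ℤ) → ℂ := fun x => ((min (lat (x - q)) (lat (p - q)) : ℕ) : ℂ) with hf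
  have hfb : ∀ x, ‖f x‖ ≤ lat (p - q) := fun x => by
    simp only [hf, Complex.norm_natCast]
    exact_mod_cast min_le_right _ _
  have hfq : f q = 0 := by simp [hf, lat_zero]
  have hfp : f p = lat (p - q) := by simp [hf]
  have bdd : ∀ g : (Fin d → ℤ) × (Fin d → ℤ) → ℂ, (∀ x, ‖g x‖ ≤ lat (p - q)) →
      Summable fun x : (Fin d → ℤ) × (Fin d → ℤ) => g x * (B p x.1 * A x.1 x.2 * B x.2 q) := by
    intro g hg
    refine Summable.of_norm_bounded (hS.mul_left (lat (p - q) : ℝ)) fun x => ?_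
    rw [norm_mul]
    gcongr
    exact hg x
  have s1 := bdd (fun x => f x.1) fun x => hfb _
  have s2 := bdd (fun x => f x.2) fun x => hfb _
  have e1 : (∑' x : (Fin d → ℤ) × (Fin d → ℤ), f x.1 * (B p x.1 * A x.1 x.2 * B x.2 q)) = 0 := by
    rw [s1.tsum_prod]
    have : ∀ m, (∑' n, f m * (B p m * A m n * B n q)) = 0 := by
      intro m
      have : ∀ n, f m * (B p m * A m n * B n q) = f m * B p m * (A m n * B n q) := fun n => by ring
      simp only [this]
      rw [tsum_mul_left, hAB]
      split_ifs with h
      · subst h; simp [hfq]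
      · simp
    simp [this]
  have e2 : (∑' x : (Fin d → ℤ) × (Fin d → ℤ), f x.2 * (B p x.1 * A x.1 x.2 * B x.2 q))
      = lat (p - q) * B p q := by
    -- summing over the first index first exposes `B A = 1`
    rw [← (Equiv.prodComm _ _).tsum_eq]
    have s2' := (Equiv.prodComm (Fin d → ℤ) (Fin d → ℤ)).summable_iff.2 s2
    rw [Summable.tsum_prod (by exact s2')]
    have : ∀ n, (∑' m, f n * (B p m * A m n * B n q))
        = if n = p then lat (p - q) * B p q else 0 := by
      intro n
      have : ∀ m, f n * (B p m * A m n * B n q) = f n * B n q * (B p m * A m n) := fun m => by ring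
      simp only [this]
      rw [tsum_mul_left, hBA]
      by_cases h : n = p
      · subst h; simp [hfp]
      · simp [h, Ne.symm h]
    simp only [Equiv.prodComm_apply, Prod.fst_swap, Prod.snd_swap, this]
    exact tsum_ite_eq p _
  have e3 : (lat (p - q) : ℂ) * B p q = ∑' x : (Fin d → ℤ) × (Fin d → ℤ),
      (f x.2 - f x.1) * (B p x.1 * A x.1 x.2 * B x.2 q) := by
    simp only [sub_mul]
    rw [s2.tsum_sub s1, e1, e2, sub_zero]
  calc (lat (p - q) : ℝ≥0∞) * ‖B p q‖ₑ = ‖(lat (p - q) : ℂ) * B p q‖ₑ := by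
        rw [enorm_mul, ← ofReal_norm (lat (p - q) : ℂ), Complex.norm_natCast,
          ENNReal.ofReal_natCast]
    _ ≤ ∑' x : (Fin d → ℤ) × (Fin d → ℤ),
        ‖(f x.2 - f x.1) * (B p x.1 * A x.1 x.2 * B x.2 q)‖ₑ := by
        rw [e3]; exact enorm_tsum_le_tsum_enorm
    _ ≤ ∑' x : (Fin d → ℤ) × (Fin d → ℤ),
        ‖B p x.1‖ₑ * (lat (x.1 - x.2) * ‖A x.1 x.2‖ₑ) * ‖B x.2 q‖ₑ := by
        gcongr with x
        rw [enorm_mul, enorm_mul, enorm_mul]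
        calc _ ≤ (lat (x.1 - x.2) : ℝ≥0∞) * (‖B p x.1‖ₑ * ‖A x.1 x.2‖ₑ * ‖B x.2 q‖ₑ) := by
              gcongr
              exact enorm_trunc_sub_le p q x.1 x.2
          _ = _ := by ring
    _ = _ := ENNReal.tsum_prod (f := fun m n => ‖B p m‖ₑ * (lat (m - n) * ‖A m n‖ₑ) * ‖B n q‖ₑ)

/-- The convolution inequality `|·| b ≤ b ∗ (|·| a) ∗ b` for the side-diagonal suprema. -/
lemma diagSup_bound (A B : (Fin d → ℤ) → (Fin d → ℤ) → ℂ)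
    (hA : (∑' l, diagSup A l) ≠ ⊤) (hB : (∑' l, diagSup B l) ≠ ⊤)
    (hAB : ∀ j l : Fin d → ℤ, (∑' m : Fin d → ℤ, A j m * B m l) = if j = l then 1 else 0)
    (hBA : ∀ j l : Fin d → ℤ, (∑' m : Fin d → ℤ, B j m * A m l) = if j = l then 1 else 0)
    (l : Fin d → ℤ) :
    (lat l : ℝ≥0∞) * diagSup B l
      ≤ ∑' m, ∑' n, diagSup B m * (lat n * diagSup A n) * diagSup B (l - m - n) := by
  conv_lhs => rw [diagSup, ENNReal.mul_iSup]
  refine iSup_le fun p => ?_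
  have h := entry_bound A B hA hB hAB hBA p (p - l)
  rw [sub_sub_cancel] at h
  refine h.trans ?_
  rw [← (Equiv.subLeft p).tsum_eq]
  refine ENNReal.tsum_le_tsum fun m => ?_
  rw [← (Equiv.subLeft (p - m)).tsum_eq]
  refine ENNReal.tsum_le_tsum fun n => ?_
  simp only [Equiv.subLeft_apply]
  have h1 := enorm_le_diagSup B p (p - m)
  have h2 := enorm_le_diagSup A (p - m) (p - m - n)
  have h3 := enorm_le_diagSup B (p - m - n) (p - l)
  rw [sub_sub_cancel] at h1 h2
  rw [show p - m - n - (p - l) = l - m - n by abel] at h3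
  rw [sub_sub_cancel]
  gcongr

/-- Weighted norm form of a triple convolution inequality, for the submultiplicative weight
`(1+|l|)^i`. -/
lemma weighted_bound (i : ℕ) (a b c : (Fin d → ℤ) → ℝ≥0∞)
    (h : ∀ l, c l ≤ ∑' m, ∑' n, b m * a n * b (l - m - n)) :
    (∑' l, ((1 + lat l : ℕ) : ℝ≥0∞) ^ i * c l)
      ≤ (∑' l, ((1 + lat l : ℕ) : ℝ≥0∞) ^ i * b l) * (∑' l, ((1 + lat l : ℕ) : ℝ≥0∞) ^ i * a l)
        * (∑' l, ((1 + lat l : ℕ) : ℝ≥0∞) ^ i * b l) := by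
  set w : (Fin d → ℤ) → ℝ≥0∞ := fun l => ((1 + lat l : ℕ) : ℝ≥0∞) ^ i with hw
  have hsub : ∀ l m n, w l ≤ w m * w n * w (l - m - n) := by
    intro l m n
    simp only [hw]
    rw [← mul_pow, ← mul_pow]
    gcongr
    rw [← Nat.cast_mul, ← Nat.cast_mul]
    gcongr
    have h1 := lat_add_le (m + n) (l - m - n)
    have h2 := lat_add_le m n
    rw [show m + n + (l - m - n) = l by abel] at h1
    calc 1 + lat l ≤ 1 + (lat m + lat n + lat (l - m - n)) := by omega
      _ ≤ _ := by
        generalize lat m = x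
        generalize lat n = y
        generalize lat (l - m - n) = z
        have : 0 ≤ x * y + x * z + y * z + x * y * z := Nat.zero_le _
        nlinarith
  calc (∑' l, w l * c l)
      ≤ ∑' l, ∑' m, ∑' n, (w m * b m) * (w n * a n) * (w (l - m - n) * b (l - m - n)) := by
        refine ENNReal.tsum_le_tsum fun l => ?_
        refine (mul_le_mul_right (h l) (w l)).trans ?_
        rw [← ENNReal.tsum_mul_left]
        refine ENNReal.tsum_le_tsum fun m => ?_
        rw [← ENNReal.tsum_mul_left]
        refine ENNReal.tsum_le_tsum fun n => ?_
        calc _ ≤ (w m * w n * w (l - m - n)) * (b m * a n * b (l - m - n)) := by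
              gcongr
              exact hsub l m n
          _ = _ := by ring
    _ = ∑' m, ∑' n, ∑' l, (w m * b m) * (w n * a n) * (w (l - m - n) * b (l - m - n)) := by
        rw [ENNReal.tsum_comm]
        congr 1; ext m
        rw [ENNReal.tsum_comm]
    _ = ∑' m, ∑' n, (w m * b m) * (w n * a n) * ∑' l, w l * b l := by
        congr 1; ext m
        congr 1; ext n
        rw [ENNReal.tsum_mul_left]
        congr 1
        rw [← (Equiv.subRight (m + n)).tsum_eq (fun l => w l * b l)]
        simp only [Equiv.subRight_apply, sub_sub]
    _ = _ := by
        simp_rw [ENNReal.tsum_mul_right, ENNReal.tsum_mul_left, ENNReal.tsum_mul_right]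
        rfl

lemma weighted_mono (A : (Fin d → ℤ) → (Fin d → ℤ) → ℂ) {i k : ℕ} (hik : i ≤ k)
    (hA : (∑' l, ((1 + lat l : ℕ) : ℝ≥0∞) ^ k * diagSup A l) ≠ ⊤) :
    (∑' l, ((1 + lat l : ℕ) : ℝ≥0∞) ^ i * diagSup A l) ≠ ⊤ := by
  refine ne_top_of_le_ne_top hA (ENNReal.tsum_le_tsum fun l => ?_)
  gcongr
  exact_mod_cast Nat.le_add_right 1 _

end

/-- The algebra `C_k` of convolution-dominated matrices over `ℤ^d` is
inverse-closed in `C_0`: if `A ∈ C_k` (i.e. `Σ_l (1+|l|)^k sup_m |A(m, m-l)| < ∞`, sums and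
suprema taken in `ℝ≥0∞`, `|l|` the 1-norm), `B ∈ C_0`, and `B` is a two-sided inverse of `A`
under (absolutely convergent) matrix multiplication, then `B ∈ C_k`. -/
theorem convolution_dominated_inverse_closed
    (d k : ℕ)
    (A B : (Fin d → ℤ) → (Fin d → ℤ) → ℂ)
    (hA : (∑' l : Fin d → ℤ, ((1 + ∑ j, (l j).natAbs : ℕ) : ℝ≥0∞) ^ k *
        ⨆ m : Fin d → ℤ, (‖A m (m - l)‖₊ : ℝ≥0∞)) ≠ ⊤)
    (hB : (∑' l : Fin d → ℤ, ⨆ m : Fin d → ℤ, (‖B m (m - l)‖₊ : ℝ≥0∞)) ≠ ⊤)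
    (habsAB : ∀ j l : Fin d → ℤ, Summable (fun m : Fin d → ℤ => ‖A j m‖ * ‖B m l‖))
    (habsBA : ∀ j l : Fin d → ℤ, Summable (fun m : Fin d → ℤ => ‖B j m‖ * ‖A m l‖))
    (hAB : ∀ j l : Fin d → ℤ,
      (∑' m : Fin d → ℤ, A j m * B m l) = if j = l then 1 else 0)
    (hBA : ∀ j l : Fin d → ℤ,
      (∑' m : Fin d → ℤ, B j m * A m l) = if j = l then 1 else 0) :
    (∑' l : Fin d → ℤ, ((1 + ∑ j, (l j).natAbs : ℕ) : ℝ≥0∞) ^ k *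
        ⨆ m : Fin d → ℤ, (‖B m (m - l)‖₊ : ℝ≥0∞)) ≠ ⊤ := by
  change (∑' l, ((1 + lat l : ℕ) : ℝ≥0∞) ^ k * diagSup A l) ≠ ⊤ at hA
  change (∑' l, diagSup B l) ≠ ⊤ at hB
  change (∑' l, ((1 + lat l : ℕ) : ℝ≥0∞) ^ k * diagSup B l) ≠ ⊤
  have hA0 : (∑' l, diagSup A l) ≠ ⊤ := by simpa using weighted_mono A (Nat.zero_le k) hA
  suffices H : ∀ i, i ≤ k → (∑' l, ((1 + lat l : ℕ) : ℝ≥0∞) ^ i * diagSup B l) ≠ ⊤ from H k le_rfl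
  intro i
  induction i with
  | zero => intro _; simpa using hB
  | succ i ih =>
    intro hi
    have hBi := ih (by omega)
    have hAi : (∑' l, ((1 + lat l : ℕ) : ℝ≥0∞) ^ i * (lat l * diagSup A l)) ≠ ⊤ := by
      refine ne_top_of_le_ne_top (weighted_mono A hi hA) (ENNReal.tsum_le_tsum fun l => ?_)
      rw [pow_succ, mul_assoc]
      gcongr
      omega
    have hle := weighted_bound i (fun l => lat l * diagSup A l) (diagSup B)
      (fun l => lat l * diagSup B l) (diagSup_bound A B hA0 hB hAB hBA)
    have hfin := ne_top_of_le_ne_top (ENNReal.mul_ne_top (ENNReal.mul_ne_top hBi hAi) hBi) hle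
    -- `(1+|l|)^(i+1) b = (1+|l|)^i b + (1+|l|)^i |l| b`
    have hsplit : (∑' l, ((1 + lat l : ℕ) : ℝ≥0∞) ^ (i + 1) * diagSup B l)
        = (∑' l, ((1 + lat l : ℕ) : ℝ≥0∞) ^ i * diagSup B l)
          + ∑' l, ((1 + lat l : ℕ) : ℝ≥0∞) ^ i * (lat l * diagSup B l) := by
      rw [← ENNReal.tsum_add]
      congr 1; ext l
      push_cast
      ring
    rw [hsplit]
    exact ENNReal.add_ne_top.2 ⟨hBi, hfin⟩
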